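/- Let λ be an antidominant composition with exactly s ≥ 1 nonzero parts (λ_1 = ⋯ = λ_{n−s} = 0 < λ_{n−s+1}), let ν = (0,…,0,λ_{n−s+1}+1,…,λ_n+1), and let 0 ≤ r ≤ min(s, n−1). Then, as an identity in ℤ[q][x_1,…,x_n]: Σ_{σ} q^{qstat(σ)} x^{k(σ)} = Σ_{k ∈ ℤ_{≥0}^n} c^{ν}_{(n−s+r+1,…,n,1,…,r)}(k_1+1,…,k_r+1, k_{r+1},…,k_{n−s+r}, k_{n−s+r+1}+1,…,k_n+1) · x_1^{k_1+1}⋯x_r^{k_r+1}·x_{r+1}^{k_{r+1}}⋯x_n^{k_n}, where the left-hand sum is over all appropriate fillings σ of dg'(π^r(λ)), and the subscript (n−s+r+1,…,n,1,…,r) lists n−s+r+1,…,n followed by 1,…,r. -/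

import Mathlib

open Finset

namespace CO

/-- The column diagram `dg'(λ)` of a composition, as a finset of boxes `(i, j)`,
`1 ≤ i ≤ n`, `1 ≤ j ≤ λ_i`. -/
def dgF (n : ℕ) (lam : ℕ → ℕ) : Finset (ℕ × ℕ) :=
  (Finset.Icc 1 n).biUnion fun i => (Finset.Icc 1 (lam i)).image fun j => (i, j)

/-- The augmented diagram `d̂g(λ)`: one extra box `(i, 0)` below each column. -/
def augF (n : ℕ) (lam : ℕ → ℕ) : Finset (ℕ × ℕ) :=
  dgF n lam ∪ (Finset.Icc 1 n).image fun i => (i, 0)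

/-- The box `d(u)` directly below a box. -/
def dbox (u : ℕ × ℕ) : ℕ × ℕ := (u.1, u.2 - 1)

/-- The augmented filling `σ̂`: equal to `σ` on positive rows and to `i` on `(i, 0)`. -/
def aug (σ : ℕ × ℕ → ℕ) (u : ℕ × ℕ) : ℕ := if u.2 = 0 then u.1 else σ u

/-- A filling takes values in `{1, …, n}` on the diagram. -/
def IsFilling (n : ℕ) (lam : ℕ → ℕ) (σ : ℕ × ℕ → ℕ) : Prop :=
  ∀ u ∈ dgF n lam, 1 ≤ σ u ∧ σ u ≤ n

/-- Attacking boxes: same row, or consecutive rows with the lower box to the right. -/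
def Attack (u v : ℕ × ℕ) : Prop :=
  u ≠ v ∧ (u.2 = v.2 ∨ (u.2 = v.2 + 1 ∧ u.1 < v.1) ∨ (v.2 = u.2 + 1 ∧ v.1 < u.1))

/-- A non-attacking filling: `σ̂` takes distinct values on attacking pairs of the
augmented diagram. -/
def NonAttacking (n : ℕ) (lam : ℕ → ℕ) (σ : ℕ × ℕ → ℕ) : Prop :=
  ∀ u ∈ augF n lam, ∀ v ∈ augF n lam, Attack u v → aug σ u ≠ aug σ v

/-- The arm of a box `u`. -/
def armF (n : ℕ) (lam : ℕ → ℕ) (u : ℕ × ℕ) : Finset (ℕ × ℕ) :=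
  ((dgF n lam).filter fun v => v.1 < u.1 ∧ v.2 = u.2 ∧ lam v.1 ≤ lam u.1) ∪
    ((augF n lam).filter fun v => u.1 < v.1 ∧ v.2 + 1 = u.2 ∧ lam v.1 < lam u.1)

/-- `a(u) = |arm(u)|`. -/
def armCard (n : ℕ) (lam : ℕ → ℕ) (u : ℕ × ℕ) : ℕ := (armF n lam u).card

/-- The number of inversions of `σ̂`: attacking pairs `u, u'` with `σ̂(u) < σ̂(u')`
and (same row with `u` to the left, or `u'` one row above `u` strictly to the left). -/
def invCard (n : ℕ) (lam : ℕ → ℕ) (σ : ℕ × ℕ → ℕ) : ℕ :=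
  ((augF n lam ×ˢ augF n lam).filter fun p =>
    aug σ p.1 < aug σ p.2 ∧
      ((p.1.2 = p.2.2 ∧ p.1.1 < p.2.1) ∨ (p.2.2 = p.1.2 + 1 ∧ p.2.1 < p.1.1))).card

/-- The descent set of `σ̂`. -/
def desF (n : ℕ) (lam : ℕ → ℕ) (σ : ℕ × ℕ → ℕ) : Finset (ℕ × ℕ) :=
  (dgF n lam).filter fun u => aug σ (dbox u) < aug σ u

/-- The statistic `coinv(σ̂)` (as an integer). -/
def coinv (n : ℕ) (lam : ℕ → ℕ) (σ : ℕ × ℕ → ℕ) : ℤ :=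
  (∑ u ∈ dgF n lam, (armCard n lam u : ℤ)) - invCard n lam σ +
    (((Finset.Icc 1 n ×ˢ Finset.Icc 1 n).filter fun p =>
      p.1 < p.2 ∧ lam p.1 ≤ lam p.2).card : ℤ) +
    ∑ u ∈ desF n lam σ, (armCard n lam u : ℤ)

/-- The statistic `T(σ)`. -/
def Tstat (n : ℕ) (lam : ℕ → ℕ) (σ : ℕ × ℕ → ℕ) : ℤ :=
  coinv n lam σ -
    ∑ u ∈ (dgF n lam).filter fun u => aug σ u ≠ aug σ (dbox u), (armCard n lam u : ℤ)

/-- Antidominant composition: `λ_1 ≤ ⋯ ≤ λ_n`. -/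
def Antidominant (n : ℕ) (lam : ℕ → ℕ) : Prop :=
  ∀ i j, 1 ≤ i → i ≤ j → j ≤ n → lam i ≤ lam j

/-- Appropriate filling: non-attacking with `T(σ) = 0`. -/
def Appropriate (n : ℕ) (lam : ℕ → ℕ) (σ : ℕ × ℕ → ℕ) : Prop :=
  IsFilling n lam σ ∧ NonAttacking n lam σ ∧ Tstat n lam σ = 0

/-- The operation `π` on compositions: `π(λ) = (λ_n + 1, λ_1, …, λ_{n-1})`. -/
def piComp (n : ℕ) (lam : ℕ → ℕ) : ℕ → ℕ :=
  fun i => if i = 1 then lam n + 1 else lam (i - 1)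

/-- The operation `π` on boxes. -/
def piBox (n : ℕ) (u : ℕ × ℕ) : ℕ × ℕ :=
  if u.1 < n then (u.1 + 1, u.2) else (1, u.2 + 1)

/-- Extension by zero of a function defined on the diagram. -/
def ext (n : ℕ) (lam : ℕ → ℕ) (f : {u // u ∈ dgF n lam} → ℕ) : ℕ × ℕ → ℕ :=
  fun u => if h : u ∈ dgF n lam then f ⟨u, h⟩ else 0

/-- `qstat(σ) = Σ (l(u) + 1)` over boxes `u` with `σ̂(u) < σ̂(d(u))`. -/
def qstat (n : ℕ) (lam : ℕ → ℕ) (σ : ℕ × ℕ → ℕ) : ℕ :=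
  ∑ u ∈ (dgF n lam).filter fun u => aug σ u < aug σ (dbox u), (lam u.1 - u.2 + 1)

end CO

namespace CO

/-- The statistic `asc(τ) = Σ (l(u) + 1)` over boxes `u = (i, j)` with `j ≥ 2` and
`τ(u) < τ(d(u))`. -/
def ascStat (n : ℕ) (mu : ℕ → ℕ) (τ : ℕ × ℕ → ℕ) : ℕ :=
  ∑ u ∈ (dgF n mu).filter fun u => 2 ≤ u.2 ∧ τ u < τ (dbox u), (mu u.1 - u.2 + 1)

/-- The greedy rule (iii): for boxes in rows `≥ 2`, with `S = τ(arm(u)) ∪ {τ(u)}`,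
`τ(u)` is the minimum of `{x ∈ S : x ≥ τ(d(u))}` if nonempty, and `min S` otherwise. -/
def GreedyRule (n : ℕ) (mu : ℕ → ℕ) (τ : ℕ × ℕ → ℕ) : Prop :=
  ∀ u ∈ dgF n mu, 2 ≤ u.2 →
    (({x ∈ τ '' ↑(armF n mu u) ∪ {τ u} | τ (dbox u) ≤ x}.Nonempty →
        τ u = sInf {x ∈ τ '' ↑(armF n mu u) ∪ {τ u} | τ (dbox u) ≤ x}) ∧
      (¬ {x ∈ τ '' ↑(armF n mu u) ∪ {τ u} | τ (dbox u) ≤ x}.Nonempty →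
        τ u = sInf (τ '' ↑(armF n mu u) ∪ {τ u})))

/-- Conditions (i)–(iv) on the fillings `τ` counted by `c_a^μ(k)`. -/
def CCond (n : ℕ) (mu : ℕ → ℕ) (a : ℕ → ℕ) (k : ℕ → ℕ) (τ : ℕ × ℕ → ℕ) : Prop :=
  (∀ u ∈ dgF n mu, 1 ≤ τ u ∧ τ u ≤ n) ∧
    (∀ j, (j, 1) ∈ dgF n mu → τ (j, 1) = a j) ∧
    (∀ u ∈ dgF n mu, ∀ v ∈ dgF n mu, Attack u v → τ u ≠ τ v) ∧
    GreedyRule n mu τ ∧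
    ∀ i, 1 ≤ i → i ≤ n → ((dgF n mu).filter fun u => τ u = i).card = k i

open Classical in
/-- The coefficient `c_a^μ(k) ∈ ℤ[q]`: the generating function `Σ_τ q^{asc(τ)}`
over fillings satisfying (i)–(iv). -/
noncomputable def cCoef (n : ℕ) (mu : ℕ → ℕ) (a : ℕ → ℕ) (k : ℕ → ℕ) : Polynomial ℤ :=
  ∑ f ∈ (Fintype.piFinset fun _ : {u // u ∈ dgF n mu} => Finset.Icc 1 n).filter
      fun f => CCond n mu a k (ext n mu f),
    Polynomial.X ^ ascStat n mu (ext n mu f)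

end CO

namespace CO

/-- Transport a `Fin n`-tuple to a function on `{1, …, n}` (1-based indexing). -/
def liftFin (n : ℕ) (k : Fin n → ℕ) : ℕ → ℕ :=
  fun i => if h : i - 1 < n then k ⟨i - 1, h⟩ else 0

/-- The statistic `stat(w)` on words with letters in `{1, …, n}`: the number of pairs
of positions `i < j` with either `w_i < w_j < n`, or `w_i = n` and `w_j < n`. -/
def wstat (n m : ℕ) (w : Fin m → ℕ) : ℕ :=
  ((Finset.univ ×ˢ Finset.univ : Finset (Fin m × Fin m)).filter fun p =>
    p.1 < p.2 ∧ ((w p.1 < w p.2 ∧ w p.2 < n) ∨ (w p.1 = n ∧ w p.2 < n))).card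

open Classical in
/-- The `q`-multinomial coefficient `binom_q(m; l)`, as the generating function of
`stat` over words of length `m` with letters in `{1, …, n}` and content `l`. -/
noncomputable def qMultinomial (n m : ℕ) (l : ℕ → ℕ) : Polynomial ℤ :=
  ∑ w ∈ (Fintype.piFinset fun _ : Fin m => Finset.Icc 1 n).filter
      fun w => ∀ t ∈ Finset.Icc 1 n, (Finset.univ.filter fun i => w i = t).card = l t,
    Polynomial.X ^ wstat n m w

end CO

/-!
The boxes of `π^r(λ)` are obtained from those of `λ` by a map `π^r` that preserves attacking
pairs, arms, legs and the relation between `u` and `d(u)`. Moving the boxes of `ν` down by one row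
before applying `π^r` identifies `dg'(ν)` with the part of `d̂g(π^r(λ))` consisting of
`dg'(π^r(λ))` and the bottom boxes of the columns `n - s + r + 1, …, n`. Pulling `σ̂` back along
this identification gives the bijection between appropriate fillings `σ` and fillings `τ` counted
by the `c^ν`: non-attacking forces `σ` to be `i` on the box `(i, 1)` for `i ≤ r`, so that the
first row of `τ` is the prescribed one, and the bottom boxes left out create no further
conditions.

The statistic `T` is local. Every inversion consists of two bottom boxes, or of two of the boxes
`u, v, d(u)` with `v` in the arm of `u`; hence `-T(σ)` counts the pairs `(u, v)` for which the
value at `v` lies cyclically strictly between those at `d(u)` and `u`. So `T(σ) = 0` says that the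
value at `u` is the first one met when the values on `u` and its arm are read cyclically from the
value at `d(u)`, which is the greedy rule.
-/

namespace CO

section Boxes

variable {n : ℕ} {lam : ℕ → ℕ} {u v : ℕ × ℕ}

theorem mem_dgF : u ∈ dgF n lam ↔ (1 ≤ u.1 ∧ u.1 ≤ n) ∧ 1 ≤ u.2 ∧ u.2 ≤ lam u.1 := by
  obtain ⟨i, j⟩ := u
  simp only [dgF, mem_biUnion, mem_image, mem_Icc, Prod.mk.injEq]
  constructor
  · rintro ⟨_, hi, _, hj, rfl, rfl⟩
    exact ⟨hi, hj⟩
  · rintro ⟨hi, hj⟩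
    exact ⟨i, hi, j, hj, rfl, rfl⟩

theorem mem_augF : u ∈ augF n lam ↔ (1 ≤ u.1 ∧ u.1 ≤ n) ∧ u.2 ≤ lam u.1 := by
  obtain ⟨i, j⟩ := u
  simp only [augF, mem_union, mem_dgF, mem_image, mem_Icc, Prod.mk.injEq]
  constructor
  · rintro (h | ⟨_, h, rfl, rfl⟩) <;> omega
  · rintro ⟨hi, hj⟩
    rcases Nat.eq_zero_or_pos j with rfl | hj'
    · exact Or.inr ⟨i, hi, rfl, rfl⟩
    · exact Or.inl ⟨hi, hj', hj⟩

theorem mem_dgF_iff_mem_augF : u ∈ dgF n lam ↔ u ∈ augF n lam ∧ 1 ≤ u.2 := by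
  rw [mem_dgF, mem_augF]
  tauto

theorem dgF_subset_augF : dgF n lam ⊆ augF n lam :=
  subset_union_left

theorem dbox_mem_augF (hu : u ∈ dgF n lam) : dbox u ∈ augF n lam := by
  simp only [mem_dgF, mem_augF, dbox] at *
  omega

theorem dbox_eq_iff (hu : 1 ≤ u.2) : dbox u = v ↔ u = (v.1, v.2 + 1) := by
  simp only [dbox, Prod.ext_iff]
  omega

theorem dbox_mem_dgF (hu : u ∈ dgF n lam) (h2 : 2 ≤ u.2) : dbox u ∈ dgF n lam :=
  mem_dgF_iff_mem_augF.2 ⟨dbox_mem_augF hu, by simp only [dbox]; omega⟩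

theorem mem_armF : v ∈ armF n lam u ↔ ((1 ≤ v.1 ∧ v.1 ≤ n) ∧ v.2 ≤ lam v.1) ∧
    ((1 ≤ v.2 ∧ v.1 < u.1 ∧ v.2 = u.2 ∧ lam v.1 ≤ lam u.1) ∨
      (u.1 < v.1 ∧ v.2 + 1 = u.2 ∧ lam v.1 < lam u.1)) := by
  simp only [armF, mem_union, mem_filter, mem_dgF, mem_augF]
  tauto

theorem armF_subset_augF : armF n lam u ⊆ augF n lam := fun _ hv =>
  mem_augF.2 (mem_armF.1 hv).1

theorem mem_dgF_of_mem_armF (h2 : 2 ≤ u.2) (hv : v ∈ armF n lam u) : v ∈ dgF n lam := by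
  rw [mem_armF] at hv
  exact mem_dgF.2 ⟨hv.1.1, by omega, hv.1.2⟩

theorem attack_comm : Attack u v ↔ Attack v u := by
  simp only [Attack, ne_comm (a := u), eq_comm (a := u.2)]
  tauto

theorem attack_dbox_of_mem_armF (hu : u ∈ dgF n lam) (hv : v ∈ armF n lam u) :
    Attack v (dbox u) := by
  rw [mem_dgF] at hu
  rw [mem_armF] at hv
  refine ⟨?_, by simp only [dbox]; omega⟩
  rintro rfl
  simp only [dbox] at hv
  omega

theorem aug_of_eq_zero (σ : ℕ × ℕ → ℕ) (h : u.2 = 0) : aug σ u = u.1 :=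
  if_pos h

theorem aug_of_pos (σ : ℕ × ℕ → ℕ) (h : 1 ≤ u.2) : aug σ u = σ u :=
  if_neg (by omega)

theorem IsFilling.aug_mem_Icc {σ : ℕ × ℕ → ℕ} (hσ : IsFilling n lam σ) (hu : u ∈ augF n lam) :
    1 ≤ aug σ u ∧ aug σ u ≤ n := by
  rcases Nat.eq_zero_or_pos u.2 with h | h
  · rw [aug_of_eq_zero σ h]
    exact (mem_augF.1 hu).1
  · rw [aug_of_pos σ h]
    exact hσ u (mem_dgF_iff_mem_augF.2 ⟨hu, h⟩)

/-- A smaller value already occurs to the left in row one, a larger one further to the right in row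
zero. -/
theorem NonAttacking.apply_row_one {σ : ℕ × ℕ → ℕ} {r : ℕ} (hna : NonAttacking n lam σ)
    (hσ : IsFilling n lam σ) (hr : r ≤ n) (hlam : ∀ i, 1 ≤ i → i ≤ r → 1 ≤ lam i) (i : ℕ)
    (hi : 1 ≤ i) (hir : i ≤ r) : σ (i, 1) = i := by
  have mem_row : ∀ k, 1 ≤ k → k ≤ r → (k, 1) ∈ dgF n lam := fun k h h' =>
    mem_dgF.2 ⟨⟨h, h'.trans hr⟩, le_rfl, hlam k h h'⟩
  induction i using Nat.strong_induction_on with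
  | _ i ih =>
    obtain ⟨h1, hn⟩ := hσ _ (mem_row i hi hir)
    rcases lt_trichotomy (σ (i, 1)) i with hlt | heq | hgt
    · have hrep : σ (σ (i, 1), 1) = σ (i, 1) := ih _ hlt h1 (by omega)
      refine absurd ?_ (hna (σ (i, 1), 1) (dgF_subset_augF (mem_row _ h1 (by omega))) (i, 1)
        (dgF_subset_augF (mem_row i hi hir)) ⟨by simpa using hlt.ne, Or.inl rfl⟩)
      rwa [aug_of_pos σ le_rfl, aug_of_pos σ le_rfl]
    · exact heq
    · refine absurd ?_ (hna (i, 1) (dgF_subset_augF (mem_row i hi hir)) (σ (i, 1), 0)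
        (mem_augF.2 ⟨⟨h1, hn⟩, Nat.zero_le _⟩) ⟨by simp, Or.inr (Or.inl ⟨rfl, hgt⟩)⟩)
      rw [aug_of_pos σ le_rfl, aug_of_eq_zero σ rfl]

end Boxes

section Triples

attribute [local instance] LT.toSBtw

variable {n : ℕ} {lam : ℕ → ℕ} {σ : ℕ × ℕ → ℕ}

theorem inversion_position_iff {p q : ℕ × ℕ} :
    (p ∈ augF n lam ∧ q ∈ augF n lam) ∧
        ((p.2 = q.2 ∧ p.1 < q.1) ∨ (q.2 = p.2 + 1 ∧ q.1 < p.1)) ↔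
      ((p.2 = 0 ∧ q.2 = 0) ∧ ((1 ≤ p.1 ∧ p.1 ≤ n) ∧ 1 ≤ q.1 ∧ q.1 ≤ n) ∧
          p.1 < q.1 ∧ lam p.1 ≤ lam q.1) ∨
        (q ∈ dgF n lam ∧ p ∈ armF n lam q) ∨
        ((p.1, p.2 + 1) ∈ dgF n lam ∧ q ∈ armF n lam (p.1, p.2 + 1)) := by
  obtain ⟨i, j⟩ := p
  obtain ⟨i', j'⟩ := q
  simp only [mem_augF, mem_dgF, mem_armF]
  constructor
  · rintro ⟨h, ⟨rfl, hlt⟩ | ⟨rfl, hlt⟩⟩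
    · rcases Nat.eq_zero_or_pos j with rfl | hj <;>
        rcases le_or_gt (lam i) (lam i') with hl | hl <;> omega
    · rcases le_or_gt (lam i') (lam i) with hl | hl <;> omega
  · rintro (⟨⟨rfl, rfl⟩, h⟩ | h | h) <;> omega

theorem card_upper_pairs (R : ℕ × ℕ → ℕ × ℕ → Prop) [DecidableRel R] :
    #{p ∈ augF n lam ×ˢ augF n lam | (p.2 ∈ dgF n lam ∧ p.1 ∈ armF n lam p.2) ∧ R p.1 p.2} =
      ∑ u ∈ dgF n lam, #{v ∈ armF n lam u | R v u} := by
  rw [← card_sigma]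
  refine card_nbij' (fun p => ⟨p.2, p.1⟩) (fun x => (x.2, x.1)) ?_ ?_
    (fun _ _ => rfl) (fun _ _ => rfl)
  · intro p hp
    simpa [and_assoc] using (mem_filter.1 hp).2
  · intro x hx
    obtain ⟨hu, hv⟩ := mem_sigma.1 hx
    rw [mem_filter] at hv
    exact mem_filter.2 ⟨mk_mem_product (armF_subset_augF hv.1) (dgF_subset_augF hu),
      ⟨hu, hv.1⟩, hv.2⟩

theorem card_lower_pairs (R : ℕ × ℕ → ℕ × ℕ → Prop) [DecidableRel R] :
    #{p ∈ augF n lam ×ˢ augF n lam | ((p.1.1, p.1.2 + 1) ∈ dgF n lam ∧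
      p.2 ∈ armF n lam (p.1.1, p.1.2 + 1)) ∧ R p.1 p.2} =
      ∑ u ∈ dgF n lam, #{v ∈ armF n lam u | R (dbox u) v} := by
  rw [← card_sigma]
  refine card_nbij' (fun p => ⟨(p.1.1, p.1.2 + 1), p.2⟩) (fun x => (dbox x.1, x.2)) ?_ ?_
    (fun _ _ => rfl) ?_
  · intro p hp
    simpa [and_assoc, dbox] using (mem_filter.1 hp).2
  · rintro ⟨u, v⟩ hx
    obtain ⟨hu, hv⟩ := mem_sigma.1 hx
    rw [mem_filter] at hv
    have hdu := (dbox_eq_iff (mem_dgF.1 hu).2.1).1 rfl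
    refine mem_filter.2 ⟨mk_mem_product (dbox_mem_augF hu) (armF_subset_augF hv.1), ?_, hv.2⟩
    dsimp only
    rw [← hdu]
    exact ⟨hu, hv.1⟩
  · rintro ⟨u, v⟩ hx
    have hdu := (dbox_eq_iff (mem_dgF.1 (mem_sigma.1 hx).1).2.1).1 rfl
    dsimp only at hdu ⊢
    rw [← hdu]

theorem card_bottom_pairs :
    #{p ∈ augF n lam ×ˢ augF n lam | ((p.1.2 = 0 ∧ p.2.2 = 0) ∧
      ((1 ≤ p.1.1 ∧ p.1.1 ≤ n) ∧ 1 ≤ p.2.1 ∧ p.2.1 ≤ n) ∧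
        p.1.1 < p.2.1 ∧ lam p.1.1 ≤ lam p.2.1) ∧ aug σ p.1 < aug σ p.2} =
      #{p ∈ Icc 1 n ×ˢ Icc 1 n | p.1 < p.2 ∧ lam p.1 ≤ lam p.2} := by
  refine card_nbij' (fun p => (p.1.1, p.2.1)) (fun p => ((p.1, 0), (p.2, 0))) ?_ ?_ ?_
    (fun _ _ => rfl)
  · rintro p hp
    simp only [coe_filter, mem_product, mem_Icc, Set.mem_ofPred_eq] at hp ⊢
    exact hp.2.1.2
  · rintro p hp
    simp only [coe_filter, mem_product, mem_Icc, mem_augF, Set.mem_ofPred_eq] at hp ⊢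
    exact ⟨⟨⟨hp.1.1, Nat.zero_le _⟩, hp.1.2, Nat.zero_le _⟩, ⟨⟨trivial, trivial⟩, hp⟩, hp.2.1⟩
  · rintro ⟨⟨i, j⟩, i', j'⟩ hp
    obtain ⟨rfl, rfl⟩ : j = 0 ∧ j' = 0 := (mem_filter.1 hp).2.1.1
    rfl

theorem invCard_eq_add_sum (n : ℕ) (lam : ℕ → ℕ) (σ : ℕ × ℕ → ℕ) :
    invCard n lam σ =
      #{p ∈ Icc 1 n ×ˢ Icc 1 n | p.1 < p.2 ∧ lam p.1 ≤ lam p.2} +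
        ∑ u ∈ dgF n lam, (#{v ∈ armF n lam u | aug σ v < aug σ u} +
          #{v ∈ armF n lam u | aug σ (dbox u) < aug σ v}) := by
  rw [sum_add_distrib, ← card_bottom_pairs (σ := σ),
    ← card_upper_pairs fun v u => aug σ v < aug σ u,
    ← card_lower_pairs fun u v => aug σ u < aug σ v, invCard, ← card_union_of_disjoint,
    ← card_union_of_disjoint, ← filter_or, ← filter_or]
  · refine congrArg card (filter_congr fun p hp => ?_)
    rw [← or_and_right, ← or_and_right, ← inversion_position_iff, and_comm (a := _ < _),
      and_iff_right (mem_product.1 hp)]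
  · rw [← filter_or]
    refine disjoint_filter.2 fun p _ h h' => ?_
    rcases h' with h' | h'
    · have hdg := mem_dgF.1 h'.1.1
      omega
    · have harm := mem_armF.1 h'.1.2
      dsimp only at harm
      omega
  · refine disjoint_filter.2 fun p _ h h' => ?_
    have harm := mem_armF.1 h.1.2
    have harm' := mem_armF.1 h'.1.2
    dsimp only at harm'
    omega

open Classical in
theorem Tstat_eq_neg_sum (hna : NonAttacking n lam σ) :
    Tstat n lam σ =
      -∑ u ∈ dgF n lam, (#{v ∈ armF n lam u | sbtw (aug σ (dbox u)) (aug σ v) (aug σ u)} : ℤ) := by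
  have hlocal : ∀ u ∈ dgF n lam, (armCard n lam u : ℤ) -
      (#{v ∈ armF n lam u | aug σ v < aug σ u} + #{v ∈ armF n lam u | aug σ (dbox u) < aug σ v}) +
      (if aug σ (dbox u) < aug σ u then armCard n lam u else 0) -
      (if aug σ u ≠ aug σ (dbox u) then armCard n lam u else 0) =
      -#{v ∈ armF n lam u | sbtw (aug σ (dbox u)) (aug σ v) (aug σ u)} := by
    intro u hu
    simp only [armCard, card_eq_sum_ones, sum_filter]
    push_cast
    have hite : ∀ (p : Prop) [Decidable p], (if p then ∑ _ ∈ armF n lam u, (1 : ℤ) else 0) =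
        ∑ _ ∈ armF n lam u, if p then 1 else 0 := by
      intro p _
      split_ifs <;> simp
    rw [hite, hite, ← sum_add_distrib, ← sum_sub_distrib, ← sum_add_distrib, ← sum_sub_distrib,
      ← sum_neg_distrib]
    refine sum_congr rfl fun v hv => ?_
    have hvd := hna v (armF_subset_augF hv) _ (dbox_mem_augF hu) (attack_dbox_of_mem_armF hu hv)
    simp only [sbtw_iff]
    split_ifs <;> omega
  rw [Tstat, coinv, invCard_eq_add_sum, desF, sum_filter, sum_filter, ← sum_neg_distrib,
    ← sum_congr rfl hlocal]
  simp only [sum_add_distrib, sum_sub_distrib]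
  push_cast
  ring

theorem Tstat_eq_zero_iff (hna : NonAttacking n lam σ) :
    Tstat n lam σ = 0 ↔ ∀ u ∈ dgF n lam, ∀ v ∈ armF n lam u,
      ¬ sbtw (aug σ (dbox u)) (aug σ v) (aug σ u) := by
  rw [Tstat_eq_neg_sum hna, neg_eq_zero, sum_eq_zero_iff_of_nonneg fun _ _ => Nat.cast_nonneg _]
  simp only [Nat.cast_eq_zero, card_eq_zero, filter_eq_empty_iff]

/-- Reading the values cyclically from `w`, the greedy choice is the first element of `S`. -/
theorem greedy_iff_forall_not_sbtw {S : Set ℕ} {x w : ℕ} (hw : w ∉ S) :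
    (({y ∈ S ∪ {x} | w ≤ y}.Nonempty → x = sInf {y ∈ S ∪ {x} | w ≤ y}) ∧
      (¬ {y ∈ S ∪ {x} | w ≤ y}.Nonempty → x = sInf (S ∪ {x}))) ↔
      ∀ y ∈ S, ¬ sbtw w y x := by
  have eq_sInf_iff : ∀ T : Set ℕ, x ∈ T → (x = sInf T ↔ ∀ y ∈ T, x ≤ y) := fun T hx =>
    ⟨fun h y hy => h ▸ Nat.sInf_le hy, fun h => (h _ (Nat.sInf_mem ⟨x, hx⟩)).antisymm
      (Nat.sInf_le hx)⟩
  have hne : ∀ y ∈ S, y ≠ w := fun y hy h => hw (h ▸ hy)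
  have hx : x ∈ S ∪ {x} := Or.inr rfl
  rcases le_or_gt w x with hwx | hxw
  · have hbtw : (∀ y ∈ S, ¬ sbtw w y x) ↔ ∀ y ∈ S ∪ {x}, w ≤ y → x ≤ y := by
      simp only [Set.union_singleton, Set.forall_mem_insert, le_refl, implies_true, true_and]
      refine forall₂_congr fun y hy => ?_
      have := hne y hy
      rw [sbtw_iff]
      omega
    have hT : {y ∈ S ∪ {x} | w ≤ y}.Nonempty := ⟨x, hx, hwx⟩
    rw [hbtw, and_iff_left fun h => absurd hT h, forall_prop_of_true hT,
      eq_sInf_iff {y ∈ S ∪ {x} | w ≤ y} ⟨hx, hwx⟩]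
    exact ⟨fun h y hy hwy => h y ⟨hy, hwy⟩, fun h y hy => h y hy.1 hy.2⟩
  · have hbtw : (∀ y ∈ S, ¬ sbtw w y x) ↔ ∀ y ∈ S ∪ {x}, y < w ∧ x ≤ y := by
      simp only [Set.union_singleton, Set.forall_mem_insert, le_refl, and_true, hxw, true_and]
      refine forall₂_congr fun y hy => ?_
      have := hne y hy
      rw [sbtw_iff]
      omega
    rw [hbtw]
    constructor
    · rintro ⟨hsome, hnone⟩
      have hT : ¬ {y ∈ S ∪ {x} | w ≤ y}.Nonempty := fun hT =>
        absurd (hsome hT ▸ (Nat.sInf_mem hT).2) hxw.not_ge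
      exact fun y hy => ⟨not_le.1 fun hwy => hT ⟨y, hy, hwy⟩,
        (eq_sInf_iff _ hx).1 (hnone hT) y hy⟩
    · intro h
      have hT : ¬ {y ∈ S ∪ {x} | w ≤ y}.Nonempty := fun ⟨y, hy, hwy⟩ => (h y hy).1.not_ge hwy
      exact ⟨fun hT' => absurd hT' hT, fun _ => (eq_sInf_iff _ hx).2 fun y hy => (h y hy).2⟩

theorem greedyRule_iff {τ : ℕ × ℕ → ℕ}
    (hna : ∀ u ∈ dgF n lam, ∀ v ∈ dgF n lam, Attack u v → τ u ≠ τ v) :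
    GreedyRule n lam τ ↔ ∀ u ∈ dgF n lam, 2 ≤ u.2 → ∀ v ∈ armF n lam u,
      ¬ sbtw (τ (dbox u)) (τ v) (τ u) := by
  refine forall₃_congr fun u hu h2 => ?_
  rw [greedy_iff_forall_not_sbtw, Set.forall_mem_image]
  · simp only [mem_coe]
  · rintro ⟨v, hv, hvu⟩
    exact hna v (mem_dgF_of_mem_armF h2 hv) _ (dbox_mem_dgF hu h2)
      (attack_dbox_of_mem_armF hu hv) hvu

end Triples

section Rotation

variable {n r : ℕ} {lam : ℕ → ℕ} {u v : ℕ × ℕ}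

/-- The set of boxes, of any height, in the columns `1, …, n`, on which `π` is injective. -/
def columns (n : ℕ) : Set (ℕ × ℕ) := {u | 1 ≤ u.1 ∧ u.1 ≤ n}

theorem mem_columns_of_mem_augF (hu : u ∈ augF n lam) : u ∈ columns n :=
  (mem_augF.1 hu).1

theorem mapsTo_piBox : Set.MapsTo (piBox n) (columns n) (columns n) := by
  rintro u ⟨h1, hn⟩
  unfold piBox
  split_ifs with h
  · exact ⟨by omega, h⟩
  · exact ⟨le_rfl, h1.trans hn⟩

theorem iterate_piBox (hr : r ≤ n) (hu : u ∈ columns n) :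
    (piBox n)^[r] u = if u.1 + r ≤ n then (u.1 + r, u.2) else (u.1 + r - n, u.2 + 1) := by
  have hn := hu.2
  induction r with
  | zero => simp [hn]
  | succ r ih =>
    rw [Function.iterate_succ_apply', ih (by omega)]
    unfold piBox
    split_ifs <;> first | omega | (ext <;> dsimp only; omega)

theorem injOn_iterate_piBox (hr : r ≤ n) : Set.InjOn (piBox n)^[r] (columns n) := by
  intro u hu v hv h
  rw [iterate_piBox hr hu, iterate_piBox hr hv] at h
  obtain ⟨hu1, hun⟩ := hu
  obtain ⟨hv1, hvn⟩ := hv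
  split_ifs at h <;> rw [Prod.mk.injEq] at h <;> ext <;> omega

theorem exists_iterate_piBox_eq (hr : r ≤ n) (hv : v ∈ columns n) (h : 1 ≤ v.2 ∨ r < v.1) :
    ∃ u ∈ columns n, (piBox n)^[r] u = v := by
  obtain ⟨h1, hn⟩ := hv
  rcases lt_or_ge r v.1 with hlt | hge
  · have hu : (v.1 - r, v.2) ∈ columns n := ⟨by simp only; omega, by simp only; omega⟩
    refine ⟨_, hu, ?_⟩
    rw [iterate_piBox hr hu, if_pos (by simp only; omega)]
    ext <;> simp only
    omega
  · have hu : (v.1 + n - r, v.2 - 1) ∈ columns n := ⟨by simp only; omega, by simp only; omega⟩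
    refine ⟨_, hu, ?_⟩
    rw [iterate_piBox hr hu, if_neg (by simp only; omega)]
    ext <;> simp only <;> omega

theorem iterate_piComp_apply_add (hu : u ∈ columns n) :
    (piComp n)^[r] lam ((piBox n)^[r] u).1 + u.2 = lam u.1 + ((piBox n)^[r] u).2 := by
  induction r with
  | zero => rfl
  | succ r ih =>
    rw [Function.iterate_succ_apply', Function.iterate_succ_apply']
    obtain ⟨h1, hn⟩ := mapsTo_piBox.iterate r hu
    set x := (piBox n)^[r] u
    have hpi : piComp n ((piComp n)^[r] lam) (piBox n x).1 + x.2 =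
        (piComp n)^[r] lam x.1 + (piBox n x).2 := by
      unfold piBox
      split_ifs with hx
      · simp only [piComp, if_neg (by omega : x.1 + 1 ≠ 1), Nat.add_sub_cancel]
      · simp only [piComp, if_true, (by omega : x.1 = n)]
        omega
    omega

theorem iterate_piBox_mem_augF (hu : u ∈ columns n) :
    (piBox n)^[r] u ∈ augF n ((piComp n)^[r] lam) ↔ u ∈ augF n lam := by
  have hleg := iterate_piComp_apply_add (r := r) (lam := lam) hu
  rw [mem_augF, mem_augF]
  exact and_congr (iff_of_true (mapsTo_piBox.iterate r hu) hu) (by omega)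

theorem attack_iterate_piBox (hr : r ≤ n) (hu : u ∈ columns n) (hv : v ∈ columns n) :
    Attack ((piBox n)^[r] u) ((piBox n)^[r] v) ↔ Attack u v := by
  rw [Attack, (injOn_iterate_piBox hr).ne_iff hu hv, Attack, iterate_piBox hr hu,
    iterate_piBox hr hv]
  refine and_congr_right fun _ => ?_
  obtain ⟨hu1, hun⟩ := hu
  obtain ⟨hv1, hvn⟩ := hv
  split_ifs <;> omega

theorem iterate_piBox_dbox (hr : r ≤ n) (hu : u ∈ columns n) (h : 1 ≤ u.2) :
    (piBox n)^[r] (dbox u) = dbox ((piBox n)^[r] u) := by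
  rw [iterate_piBox hr hu, iterate_piBox hr (show dbox u ∈ columns n from hu)]
  unfold dbox
  dsimp only
  split_ifs
  · rfl
  · ext <;> dsimp only
    omega

theorem iterate_piBox_mem_armF (hr : r ≤ n) (hu : u ∈ columns n) (hv : v ∈ columns n)
    (h : 1 ≤ u.2) :
    (piBox n)^[r] v ∈ armF n ((piComp n)^[r] lam) ((piBox n)^[r] u) ↔ v ∈ armF n lam u := by
  have hlegu := iterate_piComp_apply_add (r := r) (lam := lam) hu
  have hlegv := iterate_piComp_apply_add (r := r) (lam := lam) hv
  rw [mem_armF, mem_armF, ← mem_augF, ← mem_augF, iterate_piBox_mem_augF hv]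
  refine and_congr_right fun _ => ?_
  rw [iterate_piBox hr hu] at *
  rw [iterate_piBox hr hv] at *
  obtain ⟨hu1, hun⟩ := hu
  obtain ⟨hv1, hvn⟩ := hv
  split_ifs at * <;> dsimp only at * <;> omega

theorem armF_iterate_piBox (hr : r ≤ n) (hu : u ∈ dgF n lam) :
    armF n ((piComp n)^[r] lam) ((piBox n)^[r] u) = (armF n lam u).image (piBox n)^[r] := by
  have hu1 := (mem_dgF.1 hu).2.1
  have hcol := mem_columns_of_mem_augF (dgF_subset_augF hu)
  ext v
  rw [mem_image]
  constructor
  · intro hv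
    have hvcol := mem_columns_of_mem_augF (armF_subset_augF hv)
    obtain ⟨w, hw, rfl⟩ := exists_iterate_piBox_eq hr hvcol (by
      rw [mem_armF, iterate_piBox hr hcol] at hv
      split_ifs at hv <;> dsimp only at hv <;> omega)
    exact ⟨w, (iterate_piBox_mem_armF hr hcol hw hu1).1 hv, rfl⟩
  · rintro ⟨w, hw, rfl⟩
    exact (iterate_piBox_mem_armF hr hcol
      (mem_columns_of_mem_augF (armF_subset_augF hw)) hu1).2 hw

end Rotation

section Scroll

variable {n z r : ℕ} {lam : ℕ → ℕ} {v w w' : ℕ × ℕ}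

/-- The composition obtained from `λ` by adding a box to each column beyond the `z`-th and
emptying the first `z` columns; the `ν` of the theorem is `raise (n - s) λ`. -/
def raise (z : ℕ) (lam : ℕ → ℕ) : ℕ → ℕ :=
  fun i => if z < i then lam i + 1 else 0

/-- The map from boxes of `ν` to boxes of `π^r(λ)`: move down one row, then apply `π^r`. -/
def scroll (n r : ℕ) (w : ℕ × ℕ) : ℕ × ℕ :=
  (piBox n)^[r] (dbox w)

/-- The first row `(r + 1, …, n, 1, …, r)`. -/
def rotation (n r : ℕ) : ℕ → ℕ :=
  fun j => if j ≤ n - r then j + r else j - (n - r)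

theorem mem_dgF_raise :
    w ∈ dgF n (raise z lam) ↔ (1 ≤ w.1 ∧ w.1 ≤ n) ∧ z < w.1 ∧ 1 ≤ w.2 ∧ w.2 ≤ lam w.1 + 1 := by
  rw [mem_dgF, raise]
  split_ifs with hz <;> omega

theorem dbox_mem_columns (hw : w ∈ dgF n lam) : dbox w ∈ columns n :=
  (mem_dgF.1 hw).1

theorem dbox_mem_augF_of_mem_raise (hw : w ∈ dgF n (raise z lam)) : dbox w ∈ augF n lam := by
  rw [mem_dgF_raise] at hw
  rw [mem_augF]
  simp only [dbox]
  omega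

theorem dbox_mem_dgF_of_mem_raise (hw : w ∈ dgF n (raise z lam)) (h2 : 2 ≤ w.2) :
    dbox w ∈ dgF n lam :=
  mem_dgF_iff_mem_augF.2 ⟨dbox_mem_augF_of_mem_raise hw, by simp only [dbox]; omega⟩

theorem armF_dbox_eq_image (hz : ∀ i, 1 ≤ i → i ≤ z → lam i = 0) (hw : w ∈ dgF n (raise z lam))
    (h2 : 2 ≤ w.2) : armF n lam (dbox w) = (armF n (raise z lam) w).image dbox := by
  rw [mem_dgF_raise] at hw
  ext v
  rw [mem_image]
  constructor
  · intro hv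
    refine ⟨(v.1, v.2 + 1), ?_, rfl⟩
    have hv1 := hz v.1
    rw [mem_armF] at hv ⊢
    simp only [raise, dbox] at hv ⊢
    split_ifs <;> omega
  · rintro ⟨v, hv, rfl⟩
    rw [mem_armF] at hv ⊢
    simp only [raise, dbox] at hv ⊢
    split_ifs at hv <;> omega

theorem scroll_eq (hr : r ≤ n) (hw : w ∈ dgF n (raise z lam)) :
    scroll n r w = if w.1 + r ≤ n then (w.1 + r, w.2 - 1) else (w.1 + r - n, w.2) := by
  have hw1 := (mem_dgF.1 hw).2.1
  rw [scroll, iterate_piBox hr (dbox_mem_columns hw), dbox, Nat.sub_add_cancel hw1]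

theorem scroll_apply_fst_row_one (hr : r ≤ n) {j : ℕ} (hj : (j, 1) ∈ dgF n (raise z lam)) :
    (scroll n r (j, 1)).1 = rotation n r j := by
  rw [scroll_eq hr hj, rotation]
  split_ifs <;> dsimp only <;> omega

theorem scroll_mem_augF (hw : w ∈ dgF n (raise z lam)) :
    scroll n r w ∈ augF n ((piComp n)^[r] lam) :=
  (iterate_piBox_mem_augF (dbox_mem_columns hw)).2 (dbox_mem_augF_of_mem_raise hw)

theorem scroll_mem_dgF (hr : r ≤ n) (hw : w ∈ dgF n (raise z lam)) (h2 : 2 ≤ w.2) :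
    scroll n r w ∈ dgF n ((piComp n)^[r] lam) := by
  refine mem_dgF_iff_mem_augF.2 ⟨scroll_mem_augF hw, ?_⟩
  rw [scroll_eq hr hw]
  split_ifs <;> dsimp only <;> omega

theorem injOn_scroll (hr : r ≤ n) : Set.InjOn (scroll n r) (dgF n (raise z lam)) := by
  intro w hw w' hw' h
  rw [mem_coe] at hw hw'
  have hd := injOn_iterate_piBox hr (dbox_mem_columns hw) (dbox_mem_columns hw') h
  rw [mem_dgF] at hw hw'
  rw [(dbox_eq_iff hw.2.1).1 hd, ← (dbox_eq_iff hw'.2.1).1 rfl]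

theorem exists_scroll_eq (hz : ∀ i, 1 ≤ i → i ≤ z → lam i = 0) (hzr : z + r ≤ n)
    (hv : v ∈ augF n ((piComp n)^[r] lam)) (h : 1 ≤ v.2 ∨ z + r < v.1) :
    ∃ w ∈ dgF n (raise z lam), scroll n r w = v := by
  have hr : r ≤ n := by omega
  obtain ⟨u, hu, rfl⟩ := exists_iterate_piBox_eq hr (mem_columns_of_mem_augF hv) (by omega)
  refine ⟨(u.1, u.2 + 1), ?_, rfl⟩
  have hu_aug := mem_augF.1 ((iterate_piBox_mem_augF hu).1 hv)
  have hu_zero := hz u.1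
  rw [mem_dgF_raise]
  rw [iterate_piBox hr hu] at h
  split_ifs at h <;> dsimp only at h ⊢ <;> omega

theorem attack_scroll (hr : r ≤ n) (hw : w ∈ dgF n (raise z lam))
    (hw' : w' ∈ dgF n (raise z lam)) : Attack (scroll n r w) (scroll n r w') ↔ Attack w w' := by
  rw [scroll, scroll, attack_iterate_piBox hr (dbox_mem_columns hw)
    (dbox_mem_columns hw')]
  rw [mem_dgF] at hw hw'
  simp only [Attack, dbox, ne_eq, Prod.ext_iff]
  omega

theorem scroll_dbox (hr : r ≤ n) (hw : w ∈ dgF n (raise z lam)) (h2 : 2 ≤ w.2) :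
    scroll n r (dbox w) = dbox (scroll n r w) :=
  iterate_piBox_dbox hr (dbox_mem_columns hw) (by simp only [dbox]; omega)

theorem armF_scroll (hz : ∀ i, 1 ≤ i → i ≤ z → lam i = 0) (hr : r ≤ n)
    (hw : w ∈ dgF n (raise z lam)) (h2 : 2 ≤ w.2) :
    armF n ((piComp n)^[r] lam) (scroll n r w) =
      (armF n (raise z lam) w).image (scroll n r) := by
  rw [scroll, armF_iterate_piBox hr (dbox_mem_dgF_of_mem_raise hw h2),
    armF_dbox_eq_image hz hw h2, image_image]
  rfl

theorem scroll_leg (hw : w ∈ dgF n (raise z lam)) :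
    (piComp n)^[r] lam (scroll n r w).1 - (scroll n r w).2 = raise z lam w.1 - w.2 := by
  have hleg := iterate_piComp_apply_add (r := r) (lam := lam) (dbox_mem_columns hw)
  rw [mem_dgF_raise] at hw
  rw [← scroll] at hleg
  rw [raise, if_pos hw.2.1]
  simp only [dbox] at hleg
  omega

/-- The bottom boxes `(i, 0)` here account for the shifts `k_i + 1` with `i > n - s + r`. -/
theorem image_scroll (hz : ∀ i, 1 ≤ i → i ≤ z → lam i = 0) (hzr : z + r ≤ n) :
    (dgF n (raise z lam)).image (scroll n r) =
      dgF n ((piComp n)^[r] lam) ∪ (Ioc (z + r) n).image fun i => (i, 0) := by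
  ext v
  simp only [mem_image, mem_union, mem_Ioc]
  constructor
  · rintro ⟨w, hw, rfl⟩
    have haug : scroll n r w ∈ augF n ((piComp n)^[r] lam) := scroll_mem_augF hw
    rcases Nat.eq_zero_or_pos (scroll n r w).2 with h0 | hpos
    · refine Or.inr ⟨(scroll n r w).1, ⟨?_, (mem_augF.1 haug).1.2⟩, Prod.ext rfl h0.symm⟩
      have hcol := mem_dgF_raise.1 hw
      rw [scroll_eq (by omega) hw] at h0 ⊢
      split_ifs at * <;> dsimp only at * <;> omega
    · exact Or.inl (mem_dgF_iff_mem_augF.2 ⟨haug, hpos⟩)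
  · rintro (hv | ⟨i, hi, rfl⟩)
    · exact exists_scroll_eq hz hzr (dgF_subset_augF hv) (Or.inl (mem_dgF.1 hv).2.1)
    · exact exists_scroll_eq hz hzr (mem_augF.2 ⟨⟨by dsimp only; omega, hi.2⟩, Nat.zero_le _⟩)
        (Or.inr hi.1)

end Scroll

/-- The fillings counted by the coefficients `c_a^μ`, that is, conditions (i)–(iii) without the
condition (iv) on the content. -/
structure GreedyFilling (n : ℕ) (mu a : ℕ → ℕ) (τ : ℕ × ℕ → ℕ) : Prop where
  isFilling : IsFilling n mu τ
  first_row : ∀ j, (j, 1) ∈ dgF n mu → τ (j, 1) = a j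
  nonattacking : ∀ u ∈ dgF n mu, ∀ v ∈ dgF n mu, Attack u v → τ u ≠ τ v
  greedyRule : GreedyRule n mu τ

/-- `τ` is the pullback of `σ̂` along `scroll`: it is a filling of `ν = raise z λ`, whereas `σ` is
one of `π^r(λ)`. -/
def IsScrollPullback (n z r : ℕ) (lam : ℕ → ℕ) (σ τ : ℕ × ℕ → ℕ) : Prop :=
  ∀ w ∈ dgF n (raise z lam), τ w = aug σ (scroll n r w)

theorem one_le_iterate_piComp {n r i : ℕ} (lam : ℕ → ℕ) (hr : r ≤ n) (hi : 1 ≤ i) (hir : i ≤ r) :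
    1 ≤ (piComp n)^[r] lam i := by
  have hcol : (i + n - r, 0) ∈ columns n := ⟨by dsimp only; omega, by dsimp only; omega⟩
  have hleg := iterate_piComp_apply_add (r := r) (lam := lam) hcol
  rw [iterate_piBox hr hcol, if_neg (by dsimp only; omega)] at hleg
  simp only [(by omega : i + n - r + r - n = i)] at hleg
  omega

namespace IsScrollPullback

attribute [local instance] LT.toSBtw

variable {n z r : ℕ} {lam : ℕ → ℕ} {σ τ : ℕ × ℕ → ℕ}

theorem isFilling_iff (hτ : IsScrollPullback n z r lam σ τ)
    (hz : ∀ i, 1 ≤ i → i ≤ z → lam i = 0) (hzr : z + r ≤ n) :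
    IsFilling n ((piComp n)^[r] lam) σ ↔ IsFilling n (raise z lam) τ := by
  constructor
  · intro hσ w hw
    rw [hτ w hw]
    exact hσ.aug_mem_Icc (scroll_mem_augF hw)
  · intro hfill u hu
    have hrow := (mem_dgF.1 hu).2.1
    obtain ⟨w, hw, rfl⟩ := exists_scroll_eq hz hzr (dgF_subset_augF hu) (Or.inl hrow)
    rw [← aug_of_pos σ hrow, ← hτ w hw]
    exact hfill w hw

theorem first_row_iff (hτ : IsScrollPullback n z r lam σ τ) (hzr : z + r ≤ n) :
    (∀ i, 1 ≤ i → i ≤ r → σ (i, 1) = i) ↔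
      ∀ j, (j, 1) ∈ dgF n (raise z lam) → τ (j, 1) = rotation n r j := by
  have hr : r ≤ n := by omega
  constructor
  · intro hfix j hj
    have hcol := (mem_dgF.1 hj).1
    rw [hτ _ hj, scroll_eq hr hj, rotation]
    split_ifs
    · exact aug_of_eq_zero σ rfl
    · omega
    · omega
    · rw [aug_of_pos σ le_rfl, hfix _ (by dsimp only at *; omega) (by dsimp only at *; omega)]
      dsimp only
      omega
  · intro hfirst i hi hir
    have hj : (i + n - r, 1) ∈ dgF n (raise z lam) :=
      mem_dgF_raise.2 (by dsimp only; omega)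
    have hrow := hfirst _ hj
    rw [hτ _ hj, scroll_eq hr hj, if_neg (by dsimp only; omega), aug_of_pos σ le_rfl, rotation,
      if_neg (by omega)] at hrow
    simp only [(by omega : i + n - r + r - n = i)] at hrow
    omega

theorem exists_scroll_eq_of_aug_ne (hfix : ∀ i, 1 ≤ i → i ≤ r → σ (i, 1) = i)
    (hz : ∀ i, 1 ≤ i → i ≤ z → lam i = 0) (hzr : z + r ≤ n) {u : ℕ × ℕ}
    (hu : u ∈ dgF n ((piComp n)^[r] lam)) (hne : aug σ u ≠ aug σ (dbox u)) :
    ∃ w ∈ dgF n (raise z lam), 2 ≤ w.2 ∧ scroll n r w = u := by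
  have hrow := (mem_dgF.1 hu).2.1
  obtain ⟨w, hw, rfl⟩ := exists_scroll_eq hz hzr (dgF_subset_augF hu) (Or.inl hrow)
  refine ⟨w, hw, ?_, rfl⟩
  by_contra h2
  have hw' := mem_dgF_raise.1 hw
  have hw1 : w.2 = 1 := by omega
  rw [scroll_eq (by omega) hw] at hrow hne
  split_ifs at hrow hne
  · dsimp only at hrow
    omega
  · rw [hw1] at hne
    refine hne ?_
    rw [aug_of_pos σ le_rfl, hfix _ (by omega) (by omega), aug_of_eq_zero σ rfl]
    rfl

theorem aug_ne_of_attack_bottom (hfix : ∀ i, 1 ≤ i → i ≤ r → σ (i, 1) = i)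
    (hz : ∀ i, 1 ≤ i → i ≤ z → lam i = 0) (hzr : z + r ≤ n) {u v : ℕ × ℕ}
    (hv : v ∈ augF n ((piComp n)^[r] lam)) (hu0 : u.2 = 0) (hu : u.1 ≤ z + r)
    (huv : Attack u v) : aug σ u ≠ aug σ v := by
  obtain ⟨hne, hpos⟩ := huv
  rw [aug_of_eq_zero σ hu0]
  rcases Nat.eq_zero_or_pos v.2 with hv0 | hv1
  · rw [aug_of_eq_zero σ hv0]
    exact fun h => hne (Prod.ext h (hu0.trans hv0.symm))
  · obtain ⟨w, hw, rfl⟩ := exists_scroll_eq hz hzr hv (Or.inl hv1)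
    have hw' := mem_dgF_raise.1 hw
    rw [aug_of_pos σ hv1]
    rw [scroll_eq (by omega) hw] at *
    split_ifs at * with hwrap
    · dsimp only at *
      omega
    · have hw1 : w.2 = 1 := by dsimp only at *; omega
      rw [hw1, hfix _ (by omega) (by omega)]
      dsimp only at hpos
      omega

theorem nonAttacking_iff (hτ : IsScrollPullback n z r lam σ τ)
    (hfix : ∀ i, 1 ≤ i → i ≤ r → σ (i, 1) = i) (hz : ∀ i, 1 ≤ i → i ≤ z → lam i = 0)
    (hzr : z + r ≤ n) :
    NonAttacking n ((piComp n)^[r] lam) σ ↔ ∀ w ∈ dgF n (raise z lam),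
      ∀ w' ∈ dgF n (raise z lam), Attack w w' → τ w ≠ τ w' := by
  have hr : r ≤ n := by omega
  constructor
  · intro hna w hw w' hw' hatt
    rw [hτ w hw, hτ w' hw']
    exact hna _ (scroll_mem_augF hw) _ (scroll_mem_augF hw') ((attack_scroll hr hw hw').2 hatt)
  · intro hna u hu v hv hatt
    by_cases hu' : 1 ≤ u.2 ∨ z + r < u.1
    · by_cases hv' : 1 ≤ v.2 ∨ z + r < v.1
      · obtain ⟨w, hw, rfl⟩ := exists_scroll_eq hz hzr hu hu'
        obtain ⟨w', hw', rfl⟩ := exists_scroll_eq hz hzr hv hv'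
        rw [← hτ w hw, ← hτ w' hw']
        exact hna w hw w' hw' ((attack_scroll hr hw hw').1 hatt)
      · exact (aug_ne_of_attack_bottom hfix hz hzr hu (by omega) (by omega)
          (attack_comm.1 hatt)).symm
    · exact aug_ne_of_attack_bottom hfix hz hzr hv (by omega) (by omega) hatt

theorem apply_dbox (hτ : IsScrollPullback n z r lam σ τ) (hr : r ≤ n) {w : ℕ × ℕ}
    (hw : w ∈ dgF n (raise z lam)) (h2 : 2 ≤ w.2) :
    τ (dbox w) = aug σ (dbox (scroll n r w)) := by
  rw [hτ _ (dbox_mem_dgF hw h2), scroll_dbox hr hw h2]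

theorem Tstat_eq_zero_iff_greedyRule (hτ : IsScrollPullback n z r lam σ τ)
    (hfix : ∀ i, 1 ≤ i → i ≤ r → σ (i, 1) = i) (hz : ∀ i, 1 ≤ i → i ≤ z → lam i = 0)
    (hzr : z + r ≤ n) (hna : NonAttacking n ((piComp n)^[r] lam) σ) :
    Tstat n ((piComp n)^[r] lam) σ = 0 ↔ GreedyRule n (raise z lam) τ := by
  have hr : r ≤ n := by omega
  have arm_iff : ∀ w ∈ dgF n (raise z lam), 2 ≤ w.2 →
      ((∀ v ∈ armF n ((piComp n)^[r] lam) (scroll n r w),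
        ¬ sbtw (aug σ (dbox (scroll n r w))) (aug σ v) (aug σ (scroll n r w))) ↔
      ∀ v ∈ armF n (raise z lam) w, ¬ sbtw (τ (dbox w)) (τ v) (τ w)) := by
    intro w hw h2
    rw [armF_scroll hz hr hw h2, forall_mem_image, hτ.apply_dbox hr hw h2, hτ w hw]
    refine forall₂_congr fun v hv => ?_
    rw [hτ v (mem_dgF_of_mem_armF h2 hv)]
  rw [Tstat_eq_zero_iff hna, greedyRule_iff ((hτ.nonAttacking_iff hfix hz hzr).1 hna)]
  constructor
  · exact fun h w hw h2 => (arm_iff w hw h2).1 (h _ (scroll_mem_dgF hr hw h2))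
  · intro h u hu
    by_cases hne : aug σ u = aug σ (dbox u)
    · intro v _ hbtw
      rw [hne, sbtw_iff] at hbtw
      omega
    · obtain ⟨w, hw, h2, rfl⟩ := exists_scroll_eq_of_aug_ne hfix hz hzr hu hne
      exact (arm_iff w hw h2).2 (h w hw h2)

theorem appropriate_iff (hτ : IsScrollPullback n z r lam σ τ)
    (hz : ∀ i, 1 ≤ i → i ≤ z → lam i = 0) (hzr : z + r ≤ n) :
    Appropriate n ((piComp n)^[r] lam) σ ↔
      GreedyFilling n (raise z lam) (rotation n r) τ := by
  constructor
  · rintro ⟨hfill, hna, hT⟩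
    have hfix := hna.apply_row_one hfill (by omega : r ≤ n) fun _ =>
      one_le_iterate_piComp lam (by omega)
    exact ⟨(hτ.isFilling_iff hz hzr).1 hfill, (hτ.first_row_iff hzr).1 hfix,
      (hτ.nonAttacking_iff hfix hz hzr).1 hna,
      (hτ.Tstat_eq_zero_iff_greedyRule hfix hz hzr hna).1 hT⟩
  · intro hg
    have hfix := (hτ.first_row_iff hzr).2 hg.first_row
    have hna := (hτ.nonAttacking_iff hfix hz hzr).2 hg.nonattacking
    exact ⟨(hτ.isFilling_iff hz hzr).2 hg.isFilling, hna,
      (hτ.Tstat_eq_zero_iff_greedyRule hfix hz hzr hna).2 hg.greedyRule⟩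

theorem qstat_eq_ascStat (hτ : IsScrollPullback n z r lam σ τ)
    (hfix : ∀ i, 1 ≤ i → i ≤ r → σ (i, 1) = i) (hz : ∀ i, 1 ≤ i → i ≤ z → lam i = 0)
    (hzr : z + r ≤ n) : qstat n ((piComp n)^[r] lam) σ = ascStat n (raise z lam) τ := by
  have hr : r ≤ n := by omega
  refine (sum_nbij (scroll n r) ?_ ?_ ?_ ?_).symm
  · intro w hw
    obtain ⟨hw, h2, hlt⟩ := mem_filter.1 hw
    rw [hτ.apply_dbox hr hw h2, hτ w hw] at hlt
    exact mem_filter.2 ⟨scroll_mem_dgF hr hw h2, hlt⟩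
  · exact (injOn_scroll hr).mono fun w hw => (mem_filter.1 hw).1
  · intro u hu
    obtain ⟨hu, hlt⟩ := mem_filter.1 hu
    obtain ⟨w, hw, h2, rfl⟩ := exists_scroll_eq_of_aug_ne hfix hz hzr hu hlt.ne
    refine ⟨w, mem_filter.2 ⟨hw, h2, ?_⟩, rfl⟩
    rwa [hτ.apply_dbox hr hw h2, hτ w hw]
  · intro w hw
    rw [scroll_leg (mem_filter.1 hw).1]

end IsScrollPullback

/-- The number of boxes of `dg'(ν)` with entry `i`. -/
def content (n : ℕ) (nu : ℕ → ℕ) (τ : ℕ × ℕ → ℕ) (i : ℕ) : ℕ :=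
  #{w ∈ dgF n nu | τ w = i}

section Extension

variable {n : ℕ} {lam : ℕ → ℕ} {f : {u // u ∈ dgF n lam} → ℕ} {u : ℕ × ℕ}

theorem ext_of_mem (hu : u ∈ dgF n lam) : ext n lam f u = f ⟨u, hu⟩ :=
  dif_pos hu

theorem isFilling_ext_iff :
    IsFilling n lam (ext n lam f) ↔ f ∈ Fintype.piFinset fun _ => Icc 1 n := by
  simp only [IsFilling, Fintype.mem_piFinset, mem_Icc, Subtype.forall]
  exact forall₂_congr fun u hu => by rw [ext_of_mem hu]

end Extension

namespace IsScrollPullback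

variable {n z r : ℕ} {lam : ℕ → ℕ} {σ τ : ℕ × ℕ → ℕ}

theorem content_eq (hτ : IsScrollPullback n z r lam σ τ)
    (hz : ∀ i, 1 ≤ i → i ≤ z → lam i = 0) (hzr : z + r ≤ n) {i : ℕ} (hi : i ≤ n) :
    content n (raise z lam) τ i =
      content n ((piComp n)^[r] lam) σ i + if z + r < i then 1 else 0 := by
  have hinj : Set.InjOn (scroll n r) (dgF n (raise z lam)) := injOn_scroll (by omega)
  have hbottom : {v ∈ (Ioc (z + r) n).image fun k => (k, 0) | aug σ v = i} =
      if z + r < i then {(i, 0)} else ∅ := by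
    simp only [filter_image, aug_of_eq_zero, filter_eq', mem_Ioc, hi, and_true]
    split_ifs <;> simp only [image_singleton, image_empty]
  have hupper : {v ∈ dgF n ((piComp n)^[r] lam) | aug σ v = i} =
      {v ∈ dgF n ((piComp n)^[r] lam) | σ v = i} :=
    filter_congr fun v hv => by rw [aug_of_pos σ (mem_dgF.1 hv).2.1]
  have hdisj : Disjoint (dgF n ((piComp n)^[r] lam)) ((Ioc (z + r) n).image fun k => (k, 0)) := by
    refine disjoint_left.2 fun v hv hv' => ?_
    obtain ⟨k, -, rfl⟩ := mem_image.1 hv'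
    exact absurd (mem_dgF.1 hv).2.1 (Nat.not_succ_le_zero 0)
  calc content n (raise z lam) τ i
      = #{w ∈ dgF n (raise z lam) | aug σ (scroll n r w) = i} :=
        congrArg card (filter_congr fun w hw => by rw [hτ w hw])
    _ = #{v ∈ (dgF n (raise z lam)).image (scroll n r) | aug σ v = i} := by
        rw [filter_image, card_image_of_injOn (hinj.mono fun w hw => (mem_filter.1 hw).1)]
    _ = content n ((piComp n)^[r] lam) σ i + if z + r < i then 1 else 0 := by
        rw [image_scroll hz hzr, filter_union,
          card_union_of_disjoint (disjoint_filter_filter hdisj), hbottom, hupper, apply_ite card,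
          card_singleton, card_empty, content]

theorem exists_ext (hzr : z + r ≤ n)
    (hfirst : ∀ j, (j, 1) ∈ dgF n (raise z lam) → τ (j, 1) = rotation n r j) :
    ∃ f, IsScrollPullback n z r lam (ext n ((piComp n)^[r] lam) f) τ := by
  have hr : r ≤ n := by omega
  have hinv := (injOn_scroll (n := n) (z := z) (lam := lam) hr).leftInvOn_invFunOn
  refine ⟨fun u => τ (Function.invFunOn (scroll n r) (dgF n (raise z lam)) u), fun w hw => ?_⟩
  rcases Nat.eq_zero_or_pos (scroll n r w).2 with h0 | hpos
  · have hw1 := (mem_dgF.1 hw).2.1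
    have hw2 := mt (fun h2 => (mem_dgF.1 (scroll_mem_dgF hr hw h2)).2.1) (by omega)
    obtain ⟨j, h⟩ := w
    obtain rfl : h = 1 := by dsimp only at *; omega
    rw [aug_of_eq_zero _ h0, hfirst j hw, scroll_apply_fst_row_one hr hw]
  · rw [aug_of_pos _ hpos, ext_of_mem (mem_dgF_iff_mem_augF.2 ⟨scroll_mem_augF hw, hpos⟩),
      hinv hw]

theorem eq_of_mem_dgF {σ' : ℕ × ℕ → ℕ} (hσ : IsScrollPullback n z r lam σ τ)
    (hσ' : IsScrollPullback n z r lam σ' τ) (hz : ∀ i, 1 ≤ i → i ≤ z → lam i = 0)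
    (hzr : z + r ≤ n) {u : ℕ × ℕ} (hu : u ∈ dgF n ((piComp n)^[r] lam)) : σ u = σ' u := by
  have hrow := (mem_dgF.1 hu).2.1
  obtain ⟨w, hw, rfl⟩ := exists_scroll_eq hz hzr (dgF_subset_augF hu) (Or.inl hrow)
  rw [← aug_of_pos σ hrow, ← aug_of_pos σ' hrow, ← hσ w hw, ← hσ' w hw]

end IsScrollPullback

/-- For `1 ≤ i ≤ n`, the number of entries `i` in the first row `z + r + 1, …, n, 1, …, r` of `ν`.
It is the shift in the argument `k_i + 1` or `k_i` of the coefficient `c_a^ν`. -/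
def firstRowContent (z r i : ℕ) : ℕ :=
  if i ≤ r ∨ z + r < i then 1 else 0

theorem GreedyFilling.firstRowContent_le_content {n z r : ℕ} {lam : ℕ → ℕ} {τ : ℕ × ℕ → ℕ}
    (hτ : GreedyFilling n (raise z lam) (rotation n r) τ) (hzr : z + r ≤ n) {i : ℕ} (hi : 1 ≤ i)
    (hin : i ≤ n) : firstRowContent z r i ≤ content n (raise z lam) τ i := by
  rw [firstRowContent]
  split_ifs with h
  · obtain ⟨j, hzj, hjn, hj⟩ : ∃ j, z < j ∧ j ≤ n ∧ rotation n r j = i := by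
      rcases h with h | h
      · exact ⟨i + n - r, by omega, by omega, by rw [rotation, if_neg (by omega)]; omega⟩
      · exact ⟨i - r, by omega, by omega, by rw [rotation, if_pos (by omega)]; omega⟩
    have hmem : (j, 1) ∈ dgF n (raise z lam) := mem_dgF_raise.2 (by dsimp only; omega)
    exact card_pos.2 ⟨(j, 1), mem_filter.2 ⟨hmem, (hτ.first_row j hmem).trans hj⟩⟩
  · exact Nat.zero_le _

theorem IsScrollPullback.content_eq_sub_firstRowContent_add {n z r : ℕ} {lam : ℕ → ℕ}
    {σ τ : ℕ × ℕ → ℕ} (hpull : IsScrollPullback n z r lam σ τ)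
    (hτ : GreedyFilling n (raise z lam) (rotation n r) τ)
    (hz : ∀ i, 1 ≤ i → i ≤ z → lam i = 0) (hzr : z + r ≤ n) {i : ℕ} (hi : 1 ≤ i) (hin : i ≤ n) :
    content n ((piComp n)^[r] lam) σ i =
      content n (raise z lam) τ i - firstRowContent z r i + if i ≤ r then 1 else 0 := by
  have hcontent := hpull.content_eq hz hzr hin
  have hle := hτ.firstRowContent_le_content hzr hi hin
  rw [firstRowContent] at hle ⊢
  split_ifs at * <;> omega

open Classical in
theorem sum_appropriate_eq_sum_greedyFilling {M : Type*} [AddCommMonoid M] {n z r : ℕ}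
    {lam : ℕ → ℕ} (hz : ∀ i, 1 ≤ i → i ≤ z → lam i = 0) (hzr : z + r ≤ n)
    {F G : (ℕ × ℕ → ℕ) → M} (hFG : ∀ σ τ, IsScrollPullback n z r lam σ τ →
      GreedyFilling n (raise z lam) (rotation n r) τ → F σ = G τ) :
    ∑ f ∈ Fintype.piFinset (fun _ : {u // u ∈ dgF n ((piComp n)^[r] lam)} => Icc 1 n) with
        Appropriate n ((piComp n)^[r] lam) (ext n ((piComp n)^[r] lam) f),
        F (ext n ((piComp n)^[r] lam) f) =
      ∑ g ∈ Fintype.piFinset (fun _ : {w // w ∈ dgF n (raise z lam)} => Icc 1 n) with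
        GreedyFilling n (raise z lam) (rotation n r) (ext n (raise z lam) g),
        G (ext n (raise z lam) g) := by
  set pull := fun (f : {u // u ∈ dgF n ((piComp n)^[r] lam)} → ℕ)
    (w : {w // w ∈ dgF n (raise z lam)}) => aug (ext n ((piComp n)^[r] lam) f) (scroll n r w)
  have hpull : ∀ f, IsScrollPullback n z r lam (ext n ((piComp n)^[r] lam) f)
      (ext n (raise z lam) (pull f)) := fun f w hw => ext_of_mem hw
  refine sum_bij (fun f _ => pull f) (fun f hf => ?_) (fun f _ f' _ hff' => ?_)
    (fun g hg => ?_) (fun f hf => ?_)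
  · have hgreedy := ((hpull f).appropriate_iff hz hzr).1 (mem_filter.1 hf).2
    exact mem_filter.2 ⟨isFilling_ext_iff.1 hgreedy.isFilling, hgreedy⟩
  · funext u
    have := (hpull f).eq_of_mem_dgF (hff' ▸ hpull f') hz hzr u.2
    rwa [ext_of_mem u.2, ext_of_mem u.2] at this
  · have hgreedy := (mem_filter.1 hg).2
    obtain ⟨f, hf⟩ := IsScrollPullback.exists_ext hzr hgreedy.first_row
    have happ := (hf.appropriate_iff hz hzr).2 hgreedy
    refine ⟨f, mem_filter.2 ⟨isFilling_ext_iff.1 happ.1, happ⟩, funext fun w => ?_⟩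
    rw [← ext_of_mem (f := g) w.2, hf w w.2]
  · exact hFG _ _ (hpull f) (((hpull f).appropriate_iff hz hzr).1 (mem_filter.1 hf).2)

theorem cCond_iff {n : ℕ} {mu a k : ℕ → ℕ} {τ : ℕ × ℕ → ℕ} :
    CCond n mu a k τ ↔
      GreedyFilling n mu a τ ∧ ∀ i, 1 ≤ i → i ≤ n → content n mu τ i = k i :=
  ⟨fun ⟨h₁, h₂, h₃, h₄, h₅⟩ => ⟨⟨h₁, h₂, h₃, h₄⟩, h₅⟩,
    fun ⟨⟨h₁, h₂, h₃, h₄⟩, h₅⟩ => ⟨h₁, h₂, h₃, h₄, h₅⟩⟩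

theorem liftFin_succ {n : ℕ} (k : Fin n → ℕ) (i : Fin n) : liftFin n k (i + 1) = k i := by
  simp [liftFin]

open Classical in
theorem sum_cCoef_mul_eq_sum_greedyFilling {R : Type*} [Semiring R] {n : ℕ}
    {nu a shift : ℕ → ℕ} (φ : Polynomial ℤ →+* R) (M : (Fin n → ℕ) → R)
    (hshift : ∀ τ, GreedyFilling n nu a τ → ∀ i, 1 ≤ i → i ≤ n → shift i ≤ content n nu τ i) :
    ∑ k ∈ Fintype.piFinset fun _ : Fin n => range (#(dgF n nu) + 1),
        φ (cCoef n nu a fun i => liftFin n k i + shift i) * M k =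
      ∑ g ∈ Fintype.piFinset (fun _ : {w // w ∈ dgF n nu} => Icc 1 n) with
        GreedyFilling n nu a (ext n nu g), φ (Polynomial.X ^ ascStat n nu (ext n nu g)) *
          M fun i => content n nu (ext n nu g) (i + 1) - shift (i + 1) := by
  rw [← sum_fiberwise_of_maps_to (t := Fintype.piFinset fun _ : Fin n => range (#(dgF n nu) + 1))
    (g := fun g i => content n nu (ext n nu g) (i + 1) - shift (i + 1))]
  · refine sum_congr rfl fun k _ => ?_
    have hfiber : ∀ g, GreedyFilling n nu a (ext n nu g) →
        ((∀ i, 1 ≤ i → i ≤ n → content n nu (ext n nu g) i = liftFin n k i + shift i) ↔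
          (fun i : Fin n => content n nu (ext n nu g) (i + 1) - shift (i + 1)) = k) := by
      intro g hg
      rw [funext_iff]
      constructor
      · intro h i
        rw [h _ (by omega) (by omega), liftFin_succ, Nat.add_sub_cancel]
      · intro h i hi hin
        obtain ⟨j, rfl⟩ : ∃ j : Fin n, (j : ℕ) + 1 = i :=
          ⟨⟨i - 1, by omega⟩, Nat.sub_add_cancel hi⟩
        rw [liftFin_succ, ← h j, Nat.sub_add_cancel (hshift _ hg _ hi hin)]
    rw [cCoef, map_sum, sum_mul, filter_filter]
    refine sum_congr (filter_congr fun g _ => ?_) fun g hg => ?_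
    · rw [cCond_iff]
      exact and_congr_right (hfiber g)
    · rw [(mem_filter.1 hg).2.2]
  · intro g _
    exact Fintype.mem_piFinset.2 fun i => mem_range.2
      (Nat.lt_succ_of_le ((Nat.sub_le _ _).trans (card_filter_le _ _)))

end CO

open CO in
open Classical in
theorem scrolled_generating_function_general (n z r : ℕ) (lam : ℕ → ℕ)
    (hz : ∀ i, 1 ≤ i → i ≤ z → lam i = 0) (hzr : z + r ≤ n) :
    (∑ f ∈ Fintype.piFinset (fun _ : {u // u ∈ dgF n ((piComp n)^[r] lam)} => Icc 1 n) with
        Appropriate n ((piComp n)^[r] lam) (ext n ((piComp n)^[r] lam) f),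
      MvPolynomial.C (Polynomial.X ^ qstat n ((piComp n)^[r] lam) (ext n _ f)) *
        ∏ i : Fin n, (MvPolynomial.X i : MvPolynomial (Fin n) (Polynomial ℤ)) ^
          content n ((piComp n)^[r] lam) (ext n _ f) (i + 1)) =
      ∑ k ∈ Fintype.piFinset fun _ : Fin n => range (#(dgF n (raise z lam)) + 1),
        MvPolynomial.C (cCoef n (raise z lam) (rotation n r) fun i =>
          if i ≤ r ∨ z + r < i then liftFin n k i + 1 else liftFin n k i) *
        ∏ i : Fin n, (MvPolynomial.X i : MvPolynomial (Fin n) (Polynomial ℤ)) ^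
          (k i + if (i : ℕ) + 1 ≤ r then 1 else 0) := by
  have hlift : ∀ k : Fin n → ℕ, (fun i => if i ≤ r ∨ z + r < i then liftFin n k i + 1
      else liftFin n k i) = fun i => liftFin n k i + firstRowContent z r i :=
    fun k => funext fun i => by rw [firstRowContent, add_ite, add_zero]
  let X : Fin n → MvPolynomial (Fin n) (Polynomial ℤ) := MvPolynomial.X
  have hweight : ∀ σ τ, IsScrollPullback n z r lam σ τ →
      GreedyFilling n (raise z lam) (rotation n r) τ →
      MvPolynomial.C (Polynomial.X ^ qstat n ((piComp n)^[r] lam) σ) *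
          ∏ i : Fin n, X i ^ content n ((piComp n)^[r] lam) σ (i + 1) =
        MvPolynomial.C (Polynomial.X ^ ascStat n (raise z lam) τ) *
          ∏ i : Fin n, X i ^ (content n (raise z lam) τ (i + 1) -
            firstRowContent z r (i + 1) + if (i : ℕ) + 1 ≤ r then 1 else 0) := by
    intro σ τ hpull hτ
    rw [hpull.qstat_eq_ascStat ((hpull.first_row_iff hzr).2 hτ.first_row) hz hzr]
    refine congrArg _ (prod_congr rfl fun i _ => congrArg _ ?_)
    exact hpull.content_eq_sub_firstRowContent_add hτ hz hzr (by omega) (by omega)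
  simp only [hlift]
  rw [sum_cCoef_mul_eq_sum_greedyFilling MvPolynomial.C _ fun τ hτ _ =>
    hτ.firstRowContent_le_content hzr]
  exact sum_appropriate_eq_sum_greedyFilling hz hzr hweight

open CO in
open Classical in
/-- Proposition `interpretationscrollledc`. The generating
function `Σ_σ q^{qstat(σ)} x^{k(σ)}` over appropriate fillings of `dg'(π^r λ)`
equals
`Σ_k c^ν_{(n-s+r+1,…,n,1,…,r)}(k₁+1,…,k_r+1,k_{r+1},…,k_{n-s+r},k_{n-s+r+1}+1,…,k_n+1)
· x₁^{k₁+1}⋯x_r^{k_r+1} x_{r+1}^{k_{r+1}}⋯x_n^{k_n}`, where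
`ν = (0,…,0,λ_{n-s+1}+1,…,λ_n+1)`. (The sum over `k` is finite: all terms with an
entry exceeding the number of boxes of `dg'(ν)` vanish.) -/
theorem scrolled_generating_function (n : ℕ) (hn : 1 ≤ n) (lam : ℕ → ℕ)
    (hanti : Antidominant n lam)
    (s : ℕ) (hs1 : 1 ≤ s) (hsn : s ≤ n)
    (hzero : ∀ i, 1 ≤ i → i ≤ n - s → lam i = 0) (hpos : 1 ≤ lam (n - s + 1))
    (nu : ℕ → ℕ) (hnu : nu = fun i => if n - s + 1 ≤ i then lam i + 1 else 0)
    (r : ℕ) (hrs : r ≤ s) (hrn : r ≤ n - 1)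
    (mu : ℕ → ℕ) (hmu : mu = (piComp n)^[r] lam) :
    (∑ f ∈ (Fintype.piFinset fun _ : {u // u ∈ dgF n mu} => Finset.Icc 1 n).filter
        fun f => Appropriate n mu (ext n mu f),
      MvPolynomial.C (Polynomial.X ^ qstat n mu (ext n mu f)) *
        ∏ i : Fin n,
          (MvPolynomial.X i : MvPolynomial (Fin n) (Polynomial ℤ)) ^
            ((dgF n mu).filter fun u => ext n mu f u = (i : ℕ) + 1).card)
      = ∑ k ∈ Fintype.piFinset fun _ : Fin n => Finset.range ((dgF n nu).card + 1),
          MvPolynomial.C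
            (cCoef n nu (fun j => if j ≤ n - r then j + r else j - (n - r))
              fun i => if i ≤ r ∨ n - s + r + 1 ≤ i then liftFin n k i + 1
                else liftFin n k i) *
            ∏ i : Fin n,
              (MvPolynomial.X i : MvPolynomial (Fin n) (Polynomial ℤ)) ^
                (k i + if (i : ℕ) + 1 ≤ r then 1 else 0) := by
  subst hmu hnu
  exact scrolled_generating_function_general n (n - s) r lam hzero (by omega)
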